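/- Let (Ω, ℱ, F) be a probability space, α ∈ (0,1), and L an integrable real-valued random variable on Ω. Suppose the distribution function of L is continuous at VaR_α(L), i.e. F(L ≤ VaR_α(L)) = α and F(L = VaR_α(L)) = 0. Then the probability measure G defined by dG/dF = (1/(1-α))·1{L ≥ VaR_α(L)} is a probability measure absolutely continuous with respect to F whose density is bounded by 1/(1-α), and it attains the supremum in the dual representation: E_G[L] = CVaR_α(L). -/

import Mathlib

/-!
The quantile function `q = VaR F L` satisfies the Galois relation `q ξ ≤ x ↔ ξ ≤ F(L ≤ x)` for
`ξ ∈ (0,1)` (`VaR_le_iff`), so it pushes Lebesgue measure on `(0,1)` forward to the law of `L`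
(`map_VaR`). Since `F(L ≤ q α) = α`, the same relation gives `α < ξ ↔ q α < q ξ`. Hence
`∫_α^1 q = ∫_{(0,1)} q · 1{q > q α} = E_F[L · 1{L > q α}]`, and `{L = q α}` being `F`-null, this is
`(1 - α) E_G[L]`.
-/

open MeasureTheory Set

/-- Value-at-Risk at level `ξ`: the infimum of `x` such that `F(L ≤ x) ≥ ξ`. -/
noncomputable def VaR {Ω : Type*} [MeasurableSpace Ω] (F : Measure Ω) (L : Ω → ℝ) (ξ : ℝ) : ℝ :=
  sInf {x : ℝ | ξ ≤ (F {ω | L ω ≤ x}).toReal}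

/-- Conditional Value-at-Risk at level `α`: `(1/(1-α)) ∫_α^1 VaR_ξ(L) dξ`. -/
noncomputable def CVaR {Ω : Type*} [MeasurableSpace Ω] (F : Measure Ω) (L : Ω → ℝ) (α : ℝ) : ℝ :=
  (1 - α)⁻¹ * ∫ ξ in α..1, VaR F L ξ

open ProbabilityTheory Filter in
theorem VaR_le_iff {Ω : Type*} [MeasurableSpace Ω] (F : Measure Ω) [IsProbabilityMeasure F]
    {L : Ω → ℝ} (hLm : Measurable L) {ξ : ℝ} (hξ : ξ ∈ Ioo (0 : ℝ) 1) (x : ℝ) :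
    VaR F L ξ ≤ x ↔ ξ ≤ (F {ω | L ω ≤ x}).toReal := by
  have : IsProbabilityMeasure (F.map L) := Measure.isProbabilityMeasure_map hLm.aemeasurable
  have hc : ∀ y, (F {ω | L ω ≤ y}).toReal = cdf (F.map L) y := fun y => by
    rw [cdf_eq_real, Measure.real, Measure.map_apply hLm measurableSet_Iic]; rfl
  simp only [VaR, hc]
  set S := {y : ℝ | ξ ≤ cdf (F.map L) y} with hS
  have hbdd : BddBelow S := by
    obtain ⟨b, hb⟩ := ((tendsto_cdf_atBot (F.map L)).eventually (gt_mem_nhds hξ.1)).exists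
    refine ⟨b, fun y hy => ?_⟩
    by_contra! h
    exact absurd (hy.trans (monotone_cdf _ h.le)) (not_le.2 hb)
  have hne : S.Nonempty := by
    obtain ⟨b, hb⟩ := ((tendsto_cdf_atTop (F.map L)).eventually (lt_mem_nhds hξ.2)).exists
    exact ⟨b, hb.le⟩
  refine ⟨fun h => ?_, fun h => csInf_le hbdd h⟩
  -- Every `y > x` satisfies `ξ ≤ cdf y`; right-continuity of the cdf passes this to `x`.
  refine ge_of_tendsto (((cdf (F.map L)).right_continuous x).mono_left
    (nhdsWithin_mono x Ioi_subset_Ici_self)) ?_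
  filter_upwards [self_mem_nhdsWithin] with y hy
  obtain ⟨z, hz, hzy⟩ := exists_lt_of_csInf_lt hne (h.trans_lt hy)
  exact le_trans hz (monotone_cdf _ hzy.le)

theorem aemeasurable_VaR {Ω : Type*} [MeasurableSpace Ω] (F : Measure Ω) [IsProbabilityMeasure F]
    {L : Ω → ℝ} (hLm : Measurable L) :
    AEMeasurable (VaR F L) (volume.restrict (Ioo (0 : ℝ) 1)) := by
  refine aemeasurable_restrict_of_monotoneOn measurableSet_Ioo fun a ha b hb hab => ?_
  rw [VaR_le_iff F hLm ha]
  exact hab.trans ((VaR_le_iff F hLm hb _).1 le_rfl)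

/-- Quantile transform: if `U` is uniform on `(0,1)`, then `VaR_U(L)` has the law of `L`. -/
theorem map_VaR {Ω : Type*} [MeasurableSpace Ω] (F : Measure Ω) [IsProbabilityMeasure F]
    {L : Ω → ℝ} (hLm : Measurable L) :
    (volume.restrict (Ioo (0 : ℝ) 1)).map (VaR F L) = F.map L := by
  have : IsProbabilityMeasure (F.map L) := Measure.isProbabilityMeasure_map hLm.aemeasurable
  symm
  refine Measure.ext_of_Iic _ _ fun x => ?_
  rw [Measure.map_apply hLm measurableSet_Iic,
    Measure.map_apply_of_aemeasurable (aemeasurable_VaR F hLm) measurableSet_Iic,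
    Measure.restrict_apply' measurableSet_Ioo]
  set c := (F {ω | L ω ≤ x}).toReal with hc
  have hc1 : c ≤ 1 := measureReal_le_one
  have hset : VaR F L ⁻¹' Iic x ∩ Ioo 0 1 = Iic c ∩ Ioo 0 1 := by
    ext ξ
    simp only [mem_inter_iff, mem_preimage, mem_Iic, and_congr_left_iff]
    exact fun hξ => VaR_le_iff F hLm hξ x
  have hF : F (L ⁻¹' Iic x) = ENNReal.ofReal c :=
    (ENNReal.ofReal_toReal (measure_ne_top F {ω | L ω ≤ x})).symm
  rw [hset, hF]
  apply le_antisymm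
  · calc ENNReal.ofReal c = volume (Ioo 0 c) := by simp
      _ ≤ volume (Iic c ∩ Ioo 0 1) := measure_mono fun ξ h => ⟨h.2.le, h.1, h.2.trans_le hc1⟩
  · calc volume (Iic c ∩ Ioo 0 1) ≤ volume (Ioc 0 c) := measure_mono fun ξ h => ⟨h.2.1, h.1⟩
      _ = ENNReal.ofReal c := by simp

/-- If the distribution function of `L` is continuous at `VaR_α(L)`, with
`F(L ≤ VaR_α(L)) = α` and `F(L = VaR_α(L)) = 0`, then the measure `G` with density
`dG/dF = (1/(1-α))·1{L ≥ VaR_α(L)}` is a probability measure absolutely continuous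
with respect to `F`, with density bounded by `1/(1-α)` `F`-a.s., and it attains the
supremum in the dual representation: `E_G[L] = CVaR_α(L)`. -/
theorem dual_attained {Ω : Type*} [MeasurableSpace Ω] (F : Measure Ω)
    [IsProbabilityMeasure F] (α : ℝ) (hα : α ∈ Set.Ioo (0 : ℝ) 1)
    (L : Ω → ℝ) (hLm : Measurable L) (hL : Integrable L F)
    (hcdf : F {ω | L ω ≤ VaR F L α} = ENNReal.ofReal α)
    (hatom : F {ω | L ω = VaR F L α} = 0)
    (G : Measure Ω)
    (hG : G = F.withDensity
      (fun ω => if VaR F L α ≤ L ω then ENNReal.ofReal (1 / (1 - α)) else 0)) :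
    IsProbabilityMeasure G ∧ G ≪ F ∧
      (∀ᵐ ω ∂F, G.rnDeriv F ω ≤ ENNReal.ofReal (1 / (1 - α))) ∧
      ∫ ω, L ω ∂G = CVaR F L α := by
  have h1α : 0 < 1 - α := sub_pos.2 hα.2
  set v := VaR F L α with hv
  have hge : MeasurableSet {ω | v ≤ L ω} := measurableSet_le measurable_const hLm
  have hdm : Measurable fun ω => if v ≤ L ω then ENNReal.ofReal (1 / (1 - α)) else 0 :=
    Measurable.ite hge measurable_const measurable_const
  -- The null event `{L = v}` makes the strict and weak upper events interchangeable.
  have hne : ∀ᵐ ω ∂F, L ω ≠ v := by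
    rw [ae_iff]
    simpa using hatom
  have hmass : F {ω | v ≤ L ω} = ENNReal.ofReal (1 - α) := by
    have h1 : F {ω | v ≤ L ω} = F {ω | L ω ≤ v}ᶜ := by
      refine measure_congr ?_
      filter_upwards [hne] with ω hω
      refine propext ?_
      change v ≤ L ω ↔ ¬ L ω ≤ v
      rw [not_le]
      exact ⟨fun h => lt_of_le_of_ne h hω.symm, le_of_lt⟩
    rw [h1, prob_compl_eq_one_sub (measurableSet_le hLm measurable_const), hcdf,
      ENNReal.ofReal_sub _ hα.1.le, ENNReal.ofReal_one]
  refine ⟨⟨?_⟩, ?_, ?_, ?_⟩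
  · have hind : (fun ω => if v ≤ L ω then ENNReal.ofReal (1 / (1 - α)) else 0)
        = {ω | v ≤ L ω}.indicator fun _ => ENNReal.ofReal (1 / (1 - α)) := by
      ext ω; simp [indicator_apply]
    rw [hG, withDensity_apply _ MeasurableSet.univ, Measure.restrict_univ, hind,
      lintegral_indicator_const hge, hmass, ← ENNReal.ofReal_mul (by positivity),
      one_div_mul_cancel h1α.ne', ENNReal.ofReal_one]
  · rw [hG]
    exact withDensity_absolutelyContinuous _ _
  · rw [hG]
    filter_upwards [Measure.rnDeriv_withDensity F hdm] with ω hω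
    rw [hω]
    split_ifs <;> simp
  · have hq : ∫ ξ in α..1, VaR F L ξ = ∫ ω, (Ioi v).indicator id (L ω) ∂F := by
      have hmeas : Measurable ((Ioi v).indicator (id : ℝ → ℝ)) :=
        measurable_id.indicator measurableSet_Ioi
      rw [← integral_map hLm.aemeasurable hmeas.aestronglyMeasurable, ← map_VaR F hLm,
        integral_map (aemeasurable_VaR F hLm) hmeas.aestronglyMeasurable,
        intervalIntegral.integral_of_le hα.2.le, integral_Ioc_eq_integral_Ioo]
      have hset : Ioo α 1 = Ioo 0 1 ∩ Ioi α := by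
        ext ξ
        exact ⟨fun h => ⟨⟨hα.1.trans h.1, h.2⟩, h.1⟩, fun h => ⟨h.2, h.1.2⟩⟩
      rw [hset, ← setIntegral_indicator measurableSet_Ioi]
      refine setIntegral_congr_fun measurableSet_Ioo fun ξ hξ => ?_
      have hiff : α < ξ ↔ v < VaR F L ξ := by
        rw [← not_le, ← not_le, VaR_le_iff F hLm hξ, hcdf, ENNReal.toReal_ofReal hα.1.le]
      simp only [indicator_apply, mem_Ioi, hiff, id]
    rw [CVaR, hq, hG, integral_withDensity_eq_integral_toReal_smul hdm
      (ae_of_all _ fun ω => by split_ifs <;> simp), ← integral_const_mul]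
    refine integral_congr_ae ?_
    filter_upwards [hne] with ω hω
    have hiff : v ≤ L ω ↔ v < L ω := ⟨fun h => lt_of_le_of_ne h hω.symm, le_of_lt⟩
    by_cases h : v < L ω
    · simp [hiff, h, ENNReal.toReal_ofReal, h1α.le]
    · simp [hiff, h]
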